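/- Let G = F/R be a finite presentation and k a field of characteristic ℓ. Then dim_k H_2(G;k) ≤ a + b - c + e, where a = dim_k Tor(H_1(G;ℤ), k), ℓ^b and ℓ^c are the orders of the ℓ-primary subgroups of F/R[F,F] and F/R^ℓ[F,F] respectively, and e = dim_k (k ⊗_ℤ R/[F,R]). -/

import Mathlib

/-- The boundary `C₂ → C₁` of the inhomogeneous bar complex computing group homology:
`∂[g₁|g₂] = [g₂] - [g₁g₂] + [g₁]`. -/
noncomputable def barD21 (k : Type) [CommRing k] (G : Type) [Group G] :
    ((G × G) →₀ k) →ₗ[k] (G →₀ k) :=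
  Finsupp.lift (G →₀ k) k (G × G) fun p =>
    Finsupp.single p.2 1 - Finsupp.single (p.1 * p.2) 1 + Finsupp.single p.1 1

/-- The boundary `C₃ → C₂` of the inhomogeneous bar complex computing group homology:
`∂[g₁|g₂|g₃] = [g₂|g₃] - [g₁g₂|g₃] + [g₁|g₂g₃] - [g₁|g₂]`. -/
noncomputable def barD32 (k : Type) [CommRing k] (G : Type) [Group G] :
    ((G × G × G) →₀ k) →ₗ[k] ((G × G) →₀ k) :=
  Finsupp.lift ((G × G) →₀ k) k (G × G × G) fun t =>
    Finsupp.single (t.2.1, t.2.2) 1 - Finsupp.single (t.1 * t.2.1, t.2.2) 1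
      + Finsupp.single (t.1, t.2.1 * t.2.2) 1 - Finsupp.single (t.1, t.2.1) 1

/-- Second group homology `H₂(G; k)`: 2-cycles modulo 2-boundaries of the inhomogeneous
bar complex. -/
noncomputable abbrev groupH2 (k : Type) [CommRing k] (G : Type) [Group G] : Type :=
  @HasQuotient.Quotient ↥(LinearMap.ker (barD21 k G))
    (Submodule k ↥(LinearMap.ker (barD21 k G)))
    (@Submodule.hasQuotient k ↥(LinearMap.ker (barD21 k G)) _ _ _)
    ((LinearMap.range (barD32 k G)).comap (LinearMap.ker (barD21 k G)).subtype)

/-!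
Write `A` for the abelianization of `F` and `S` for the image of `R` in it. A factor set of
`1 → R → F → G → 1` sends 2-cycles of `G` to the kernel `K` of
`k ⊗ R/[F, R] → k ⊗ A` (Hopf's formula). A cycle that is sent to zero is a boundary: a linear form
`φ` vanishing on the boundaries is a 2-cocycle of `G`, which becomes a coboundary on `F` as
`H²(F; k) = 0`, hence is the transgression of an `F`-invariant homomorphism `R → k`; such a
homomorphism factors through `k ⊗ R/[F, R]`, so `φ` vanishes on the cycle too. Thus
`ℓ ^ dim H₂(G; k)` is at most `|K|`, and `|K| * [S : S ∩ ℓA] = ℓ ^ e`.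

It remains to bound `ℓ ^ c` by `ℓ ^ (a + b) * [S : S ∩ ℓA]`. The `ℓ`-primary parts of `A / S` and
`A / ℓS` have the same preimage in `A`, so their orders differ by the factor
`[S : ℓS] = [S : S ∩ ℓA] * [S ∩ ℓA : ℓS]`. Multiplication by `ℓ` maps the preimage of the
`ℓ`-torsion of `A / S` onto `S ∩ ℓA`, and `S` onto `ℓS`, so `[S ∩ ℓA : ℓS]` divides `ℓ ^ a`.
-/

section FreeGroups

open groupCohomology

universe u

variable {k G : Type u} [CommRing k] [Group G] {A : Rep.{u} k G}

/-- The group extension of `G` by `A` classified by a 2-cocycle `f`: the set `G × A` with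
multiplication `(g, a) (h, b) = (g h, a + g b + f (g, h))`. Cocycles are not assumed normalized, so
the identity is `(1, -f (1, 1))`. -/
@[ext]
structure CocycleExtension (f : cocycles₂ A) where
  base : G
  fiber : A

namespace CocycleExtension

variable {f : cocycles₂ A}

instance : Mul (CocycleExtension f) :=
  ⟨fun x y ↦ ⟨x.base * y.base, x.fiber + A.ρ x.base y.fiber + f (x.base, y.base)⟩⟩

instance : One (CocycleExtension f) := ⟨⟨1, -f (1, 1)⟩⟩

instance : Inv (CocycleExtension f) :=
  ⟨fun x ↦ ⟨x.base⁻¹, -A.ρ x.base⁻¹ x.fiber - f (x.base⁻¹, x.base) - f (1, 1)⟩⟩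

@[simp] lemma base_mul (x y : CocycleExtension f) : (x * y).base = x.base * y.base := rfl

@[simp] lemma fiber_mul (x y : CocycleExtension f) :
    (x * y).fiber = x.fiber + A.ρ x.base y.fiber + f (x.base, y.base) := rfl

@[simp] lemma base_one : (1 : CocycleExtension f).base = 1 := rfl

@[simp] lemma fiber_one : (1 : CocycleExtension f).fiber = -f (1, 1) := rfl

@[simp] lemma base_inv (x : CocycleExtension f) : x⁻¹.base = x.base⁻¹ := rfl

@[simp] lemma fiber_inv (x : CocycleExtension f) :
    x⁻¹.fiber = -A.ρ x.base⁻¹ x.fiber - f (x.base⁻¹, x.base) - f (1, 1) := rfl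

instance : Group (CocycleExtension f) :=
  Group.ofLeftAxioms
    (fun x y z ↦ by
      have hf := (mem_cocycles₂_iff (f : G × G → A)).1 f.2 x.base y.base z.base
      ext
      · simp [mul_assoc]
      · simp only [fiber_mul, base_mul, map_add, map_mul, Module.End.mul_apply]
        linear_combination (norm := abel) hf)
    (fun x ↦ by
      ext
      · simp
      · simp [cocycles₂_map_one_fst])
    (fun x ↦ by
      ext
      · simp
      · simp only [fiber_mul, fiber_inv, base_inv, fiber_one]
        abel)

/-- The projection of the extension onto its quotient `G`. -/
def proj (f : cocycles₂ A) : CocycleExtension f →* G where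
  toFun := base
  map_one' := rfl
  map_mul' _ _ := rfl

end CocycleExtension

variable [IsFreeGroup G]

lemma cocycles₂_le_coboundaries₂_of_isFreeGroup : cocycles₂ A ≤ coboundaries₂ A := by
  intro f hf
  let E := CocycleExtension (⟨f, hf⟩ : cocycles₂ A)
  let σ : G →* E := IsFreeGroup.lift fun i ↦ ⟨IsFreeGroup.of i, 0⟩
  have hσ : (CocycleExtension.proj _).comp σ = MonoidHom.id G :=
    IsFreeGroup.ext_hom fun i ↦ by simp [σ, CocycleExtension.proj]
  have hbase (g : G) : (σ g).base = g := DFunLike.congr_fun hσ g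
  have hfiber (g h : G) : (σ (g * h)).fiber = (σ g).fiber + A.ρ g (σ h).fiber + f (g, h) := by
    rw [map_mul, CocycleExtension.fiber_mul, hbase, hbase]
    rfl
  refine ⟨fun g ↦ -(σ g).fiber, funext fun ⟨g, h⟩ ↦ ?_⟩
  simp only [d₁₂_hom_apply, hfiber, map_neg]
  abel

instance subsingleton_H2_of_isFreeGroup : Subsingleton (H2 A) := by
  refine subsingleton_of_forall_eq 0 fun x ↦ ?_
  induction x using H2_induction_on with | _ f
  exact (H2π_eq_zero_iff f).2 (cocycles₂_le_coboundaries₂_of_isFreeGroup f.2)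

end FreeGroups

section BarComplex

open groupCohomology

variable {k G : Type} [CommRing k] [Group G]

lemma barD21_single (g h : G) :
    barD21 k G (Finsupp.single (g, h) 1) =
      Finsupp.single h 1 - Finsupp.single (g * h) 1 + Finsupp.single g 1 := by
  simp [barD21]

lemma barD32_single (g h j : G) :
    barD32 k G (Finsupp.single (g, h, j) 1) =
      Finsupp.single (h, j) 1 - Finsupp.single (g * h, j) 1
        + Finsupp.single (g, h * j) 1 - Finsupp.single (g, h) 1 := by
  simp [barD32]

lemma exists_primitive_of_comp_barD32_eq_zero {F : Type} [Group F]
    [Subsingleton (H2 (Rep.trivial k F k))] (p : F →* G) {φ : (G × G →₀ k) →ₗ[k] k}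
    (hφ : φ ∘ₗ barD32 k G = 0) :
    ∃ t : F → k, ∀ v w, t v + t w - t (v * w) = φ (Finsupp.single (p v, p w) 1) := by
  let f : F × F → k := fun x ↦ φ (Finsupp.single (p x.1, p x.2) 1)
  have hf : f ∈ cocycles₂ (Rep.trivial k F k) := by
    refine (mem_cocycles₂_iff (A := Rep.trivial k F k) f).2 fun u v w ↦ ?_
    have h : φ (barD32 k G (Finsupp.single (p u, p v, p w) 1)) = 0 := LinearMap.congr_fun hφ _
    rw [barD32_single, map_sub, map_add, map_sub] at h
    simp only [f, map_mul, Representation.isTrivial_def, LinearMap.id_apply]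
    linear_combination -h
  obtain ⟨t, ht⟩ := (H2π_eq_zero_iff (A := Rep.trivial k F k) ⟨f, hf⟩).1 (Subsingleton.elim _ _)
  refine ⟨t, fun v w ↦ ?_⟩
  have h : t w - t (v * w) + t v = f (v, w) := congr_fun ht (v, w)
  linear_combination h

end BarComplex

section FactorSet

variable {F : Type*} [Group F] (R : Subgroup F) [R.Normal]

/-- The factor set `G × G → R` of the extension `1 → R → F → G → 1` with `G = F ⧸ R`, for the
set-theoretic section `Quotient.out`. -/
noncomputable def factorSet (g h : F ⧸ R) : R :=
  ⟨g.out * h.out * (g * h).out⁻¹, by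
    rw [← QuotientGroup.eq_one_iff]
    simp⟩

lemma factorSet_mul_out (g h : F ⧸ R) :
    (factorSet R g h : F) * (g * h).out = g.out * h.out :=
  inv_mul_cancel_right _ _

variable {R}

/-- Homomorphisms on the normal subgroup `R` that are invariant under conjugation by the ambient
group, i.e. the elements of `Hom(R, B)^F`. -/
def IsConjInvariant {B : Type*} [Group B] (θ : R →* B) : Prop :=
  ∀ (x : F) (r : R), θ (MulAut.conjNormal x r) = θ r

section Transgression

variable {M : Type*} [AddCommGroup M] {t : F → M} {f : F ⧸ R → F ⧸ R → M}

lemma apply_mul_eq_of_mem_left (ht : ∀ v w : F, t v + t w - t (v * w) = f v w) {r : F}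
    (hr : r ∈ R) (x : F) : t (r * x) = t r + t x - t 1 := by
  have h := ht 1 x
  rw [QuotientGroup.mk_one, ← (QuotientGroup.eq_one_iff r).2 hr, ← ht, one_mul] at h
  linear_combination (norm := abel) h

lemma apply_mul_eq_of_mem_right (ht : ∀ v w : F, t v + t w - t (v * w) = f v w) (x : F) {r : F}
    (hr : r ∈ R) : t (x * r) = t x + t r - t 1 := by
  have h := ht x 1
  rw [QuotientGroup.mk_one, ← (QuotientGroup.eq_one_iff r).2 hr, ← ht, mul_one] at h
  linear_combination (norm := abel) h

/-- A function `t` on `F` whose coboundary is pulled back from a function `f` on `F ⧸ R` restricts,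
up to a constant, to a homomorphism on `R`. Up to sign, its transgression is the class of `f`. -/
def transgressionPreimage
    (ht : ∀ v w : F, t v + t w - t (v * w) = f v w) : R →* Multiplicative M :=
  MonoidHom.mk' (fun r ↦ .ofAdd (t r - t 1)) fun r r' ↦ by
    rw [← ofAdd_add, Subgroup.coe_mul, apply_mul_eq_of_mem_left ht r.2]
    congr 1
    abel

lemma toAdd_transgressionPreimage (ht : ∀ v w : F, t v + t w - t (v * w) = f v w) (r : R) :
    (transgressionPreimage ht r).toAdd = t r - t 1 := rfl

lemma isConjInvariant_transgressionPreimage (ht : ∀ v w : F, t v + t w - t (v * w) = f v w) :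
    IsConjInvariant (transgressionPreimage ht) := fun x r ↦ by
  have hl := apply_mul_eq_of_mem_left ht (MulAut.conjNormal x r).2 x
  have hr := apply_mul_eq_of_mem_right ht x r.2
  rw [MulAut.conjNormal_apply, inv_mul_cancel_right, hr] at hl
  apply Multiplicative.toAdd.injective
  rw [toAdd_transgressionPreimage, toAdd_transgressionPreimage, MulAut.conjNormal_apply]
  linear_combination (norm := abel) -hl

lemma eq_sub_transgressionPreimage_factorSet (ht : ∀ v w : F, t v + t w - t (v * w) = f v w)
    (g h : F ⧸ R) :
    f g h = t g.out + t h.out - t (g * h).out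
      - (transgressionPreimage ht (factorSet R g h)).toAdd := by
  have hgh := ht g.out h.out
  rw [← factorSet_mul_out, apply_mul_eq_of_mem_left ht (factorSet R g h).2,
    QuotientGroup.out_eq', QuotientGroup.out_eq'] at hgh
  rw [← hgh, toAdd_transgressionPreimage]
  abel

end Transgression

end FactorSet

lemma finrank_quotient_le_of_ker_le {k M N : Type*} [DivisionRing k] [AddCommGroup M] [Module k M]
    [AddCommGroup N] [Module k N] [FiniteDimensional k N] {f : M →ₗ[k] N} {P : Submodule k M}
    (hP : LinearMap.ker f ≤ P) : Module.finrank k (M ⧸ P) ≤ Module.finrank k N := by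
  have := Module.Finite.equiv f.quotKerEquivRange.symm
  calc
    Module.finrank k (M ⧸ P) ≤ Module.finrank k (M ⧸ LinearMap.ker f) :=
      LinearMap.finrank_le_finrank_of_surjective (Submodule.factor_surjective hP)
    _ = Module.finrank k (LinearMap.range f) := f.quotKerEquivRange.finrank_eq
    _ ≤ Module.finrank k N := Submodule.finrank_le _

section HopfMap

variable {k F : Type} [Group F] {R : Subgroup F} [R.Normal] {W V : Type*} [AddCommGroup W]
  [AddCommGroup V]

section CommRing

variable [CommRing k] [Module k W] [Module k V]

/-- Hopf's map at the chain level: it sends `[g|h]` to the image in `W` of the value at `(g, h)` of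
the factor set of `1 → R → F → F ⧸ R → 1`. -/
noncomputable def hopfMap (k : Type) [CommRing k] [Module k W] (κ : R →* Multiplicative W) :
    ((F ⧸ R) × (F ⧸ R) →₀ k) →ₗ[k] W :=
  Finsupp.linearCombination k fun p ↦ (κ (factorSet R p.1 p.2)).toAdd

lemma hopfMap_single (κ : R →* Multiplicative W) (g h : F ⧸ R) :
    hopfMap k κ (Finsupp.single (g, h) 1) = (κ (factorSet R g h)).toAdd := by
  simp [hopfMap]

lemma map_hopfMap_eq_zero {κ : R →* Multiplicative W} {v : F →* Multiplicative V}
    {vW : W →ₗ[k] V} (hv : ∀ r : R, vW (κ r).toAdd = (v r).toAdd)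
    {z : (F ⧸ R) × (F ⧸ R) →₀ k} (hz : barD21 k (F ⧸ R) z = 0) : vW (hopfMap k κ z) = 0 := by
  let s : (F ⧸ R →₀ k) →ₗ[k] V := Finsupp.linearCombination k fun g ↦ (v g.out).toAdd
  have hcomp : vW ∘ₗ hopfMap k κ = s ∘ₗ barD21 k (F ⧸ R) := by
    ext ⟨g, h⟩
    have hgh := congrArg (fun x ↦ (v x).toAdd) (factorSet_mul_out R g h)
    simp only [map_mul, toAdd_mul] at hgh
    simp only [LinearMap.comp_apply, Finsupp.lsingle_apply, hopfMap_single, hv, barD21_single,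
      map_add, map_sub, s, Finsupp.linearCombination_single, one_smul]
    linear_combination (norm := abel) hgh
  simpa [hz] using LinearMap.congr_fun hcomp z

/-- `κ : R → W` is universal among conjugation-invariant homomorphisms to `k`, that is, the dual
of `W` surjects onto `Hom(R, k)^F`. -/
def LiftsConjInvariant (k : Type) [CommRing k] [Module k W] (κ : R →* Multiplicative W) : Prop :=
  ∀ θ : R →* Multiplicative k, IsConjInvariant θ → ∃ L : W →ₗ[k] k, ∀ r, L (κ r).toAdd = (θ r).toAdd

end CommRing

variable [Field k] [Module k W] [Module k V]
  [Subsingleton (groupCohomology.H2 (Rep.trivial k F k))]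

theorem mem_range_barD32_of_hopfMap_eq_zero {κ : R →* Multiplicative W}
    (hκ : LiftsConjInvariant k κ) {z : (F ⧸ R) × (F ⧸ R) →₀ k}
    (hz : barD21 k (F ⧸ R) z = 0) (hκz : hopfMap k κ z = 0) :
    z ∈ LinearMap.range (barD32 k (F ⧸ R)) := by
  by_contra hzB
  obtain ⟨φ, hφz, hφB⟩ := Submodule.exists_le_ker_of_notMem hzB
  obtain ⟨t, ht⟩ := exists_primitive_of_comp_barD32_eq_zero (QuotientGroup.mk' R)
    (LinearMap.range_le_ker_iff.1 hφB)
  let f : F ⧸ R → F ⧸ R → k := fun g h ↦ φ (Finsupp.single (g, h) 1)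
  replace ht : ∀ v w : F, t v + t w - t (v * w) = f v w := ht
  obtain ⟨L, hL⟩ := hκ _ (isConjInvariant_transgressionPreimage ht)
  let s : (F ⧸ R →₀ k) →ₗ[k] k := Finsupp.linearCombination k fun g ↦ t g.out
  have hφ : φ = s ∘ₗ barD21 k (F ⧸ R) - L ∘ₗ hopfMap k κ := by
    ext ⟨g, h⟩
    simp only [LinearMap.comp_apply, LinearMap.sub_apply, Finsupp.lsingle_apply, hopfMap_single,
      hL, barD21_single, map_add, map_sub, s, Finsupp.linearCombination_single, one_smul]
    linear_combination eq_sub_transgressionPreimage_factorSet ht g h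
  exact hφz (by simp [hφ, hz, hκz])

theorem finrank_groupH2_le_finrank_ker [FiniteDimensional k W] {κ : R →* Multiplicative W}
    (hκ : LiftsConjInvariant k κ) {v : F →* Multiplicative V} {vW : W →ₗ[k] V}
    (hv : ∀ r : R, vW (κ r).toAdd = (v r).toAdd) :
    Module.finrank k (groupH2 k (F ⧸ R)) ≤ Module.finrank k (LinearMap.ker vW) := by
  let ψ : LinearMap.ker (barD21 k (F ⧸ R)) →ₗ[k] LinearMap.ker vW :=
    (hopfMap k κ).restrict fun _ hz ↦ map_hopfMap_eq_zero hv hz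
  exact finrank_quotient_le_of_ker_le (f := ψ) fun z hz ↦
    mem_range_barD32_of_hopfMap_eq_zero hκ z.2 (congrArg Subtype.val hz)

end HopfMap

section Coinvariants

variable {F : Type*} [Group F] (R : Subgroup F) (n : ℕ)

/-- The subgroup `Rⁿ` generated by the `n`-th powers of the elements of `R`. -/
def powerSubgroup : Subgroup F := Subgroup.closure {x | ∃ r ∈ R, x = r ^ n}

variable {R n} in
lemma powerSubgroup_le_iff {S : Subgroup F} : powerSubgroup R n ≤ S ↔ ∀ r ∈ R, r ^ n ∈ S := by
  rw [powerSubgroup, Subgroup.closure_le]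
  exact ⟨fun h r hr ↦ h ⟨r, hr, rfl⟩, by rintro h _ ⟨r, hr, rfl⟩; exact h r hr⟩

lemma pow_mem_powerSubgroup {r : F} (hr : r ∈ R) : r ^ n ∈ powerSubgroup R n :=
  Subgroup.subset_closure ⟨r, hr, rfl⟩

variable [R.Normal]

instance : (powerSubgroup R n).Normal where
  conj_mem x hx g := by
    suffices powerSubgroup R n ≤ (powerSubgroup R n).comap (MulAut.conj g).toMonoidHom from this hx
    refine powerSubgroup_le_iff.2 fun r hr ↦ ?_
    rw [Subgroup.mem_comap, map_pow]
    exact pow_mem_powerSubgroup R n (‹R.Normal›.conj_mem r hr g)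

/-- The group `ℤ/n ⊗ R/[F, R]` of coinvariants of `R` modulo `n`, as a quotient of `R`. -/
abbrev ModCoinvariants : Type _ := R ⧸ (⁅(⊤ : Subgroup F), R⁆ ⊔ powerSubgroup R n).subgroupOf R

namespace ModCoinvariants

/-- The projection of `R` onto its coinvariants modulo `n`. -/
def mk : R →* ModCoinvariants R n := QuotientGroup.mk' _

variable {R n}

lemma subgroupOf_le_ker {B : Type*} [Group B] (hB : ∀ b : B, b ^ n = 1) {θ : R →* B}
    (hθ : IsConjInvariant θ) :
    (⁅(⊤ : Subgroup F), R⁆ ⊔ powerSubgroup R n).subgroupOf R ≤ θ.ker := by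
  suffices ⁅(⊤ : Subgroup F), R⁆ ⊔ powerSubgroup R n ≤ θ.ker.map R.subtype by
    intro r hr
    obtain ⟨r', hr', hr'r⟩ := this hr
    rwa [← Subtype.ext hr'r]
  refine sup_le (Subgroup.commutator_le.2 fun x _ r hr ↦ ?_)
    (powerSubgroup_le_iff.2 fun r hr ↦ ?_)
  · refine ⟨MulAut.conjNormal x ⟨r, hr⟩ * ⟨r, hr⟩⁻¹, ?_, rfl⟩
    rw [SetLike.mem_coe, MonoidHom.mem_ker, map_mul, hθ, map_inv, mul_inv_cancel]
  · exact ⟨⟨r, hr⟩ ^ n, (map_pow θ _ n).trans (hB _), rfl⟩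

instance : CommGroup (ModCoinvariants R n) where
  toGroup := inferInstance
  mul_comm := by
    refine (Subgroup.Normal.quotient_commutative_iff_commutator_le.2 ?_).is_comm.comm
    rw [Subgroup.subgroupOf, ← Subgroup.map_le_iff_le_comap, Subgroup.map_subtype_commutator]
    exact (Subgroup.commutator_mono le_top le_rfl).trans le_sup_left

lemma pow_eq_one (x : ModCoinvariants R n) : x ^ n = 1 := by
  induction x using QuotientGroup.induction_on with | _ r
  rw [← QuotientGroup.mk_pow, QuotientGroup.eq_one_iff]
  exact le_sup_right (a := ⁅⊤, R⁆) (pow_mem_powerSubgroup R n r.2)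

/-- The universal property of the coinvariants modulo `n`. -/
def lift {B : Type*} [Group B] (hB : ∀ b : B, b ^ n = 1) (θ : R →* B) (hθ : IsConjInvariant θ) :
    ModCoinvariants R n →* B :=
  QuotientGroup.lift _ θ (subgroupOf_le_ker hB hθ)

end ModCoinvariants

/-- The group `ℤ/n ⊗ F/[F, F]`. -/
abbrev AbelianizationMod (F : Type*) [Group F] (n : ℕ) : Type _ :=
  Abelianization F ⧸ (powMonoidHom n : Abelianization F →* Abelianization F).range

namespace AbelianizationMod

/-- The projection of `F` onto its abelianization modulo `n`. -/
def mk : F →* AbelianizationMod F n := (QuotientGroup.mk' _).comp Abelianization.of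

variable {n}

lemma pow_eq_one (x : AbelianizationMod F n) : x ^ n = 1 := by
  induction x using QuotientGroup.induction_on with | _ x
  rw [← QuotientGroup.mk_pow, QuotientGroup.eq_one_iff]
  exact ⟨x, rfl⟩

end AbelianizationMod

namespace ModCoinvariants

/-- The map `ℤ/n ⊗ R/[F, R] → ℤ/n ⊗ F/[F, F]` induced by the inclusion of `R` in `F`. -/
def toAbelianizationMod : ModCoinvariants R n →* AbelianizationMod F n :=
  lift AbelianizationMod.pow_eq_one ((AbelianizationMod.mk n).comp R.subtype) fun x r ↦ by simp

lemma card_eq_card_ker_mul_relIndex :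
    Nat.card (ModCoinvariants R n) = Nat.card (toAbelianizationMod R n).ker *
      (powMonoidHom n : Abelianization F →* Abelianization F).range.relIndex
        (R.map Abelianization.of) := by
  have hrange : (toAbelianizationMod R n).range =
      (R.map Abelianization.of).map (QuotientGroup.mk' _) := by
    have hcomp : ((toAbelianizationMod R n).comp (mk R n)).range =
        ((AbelianizationMod.mk n).comp R.subtype).range := rfl
    rwa [MonoidHom.range_comp, MonoidHom.range_comp, R.range_subtype, mk, QuotientGroup.range_mk',
      ← MonoidHom.range_eq_map, AbelianizationMod.mk, ← Subgroup.map_map] at hcomp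
  rw [← (toAbelianizationMod R n).ker.card_mul_index, Subgroup.index_ker, hrange,
    ← Subgroup.relIndex_ker, QuotientGroup.ker_mk']

end ModCoinvariants

end Coinvariants

section ModPrime

variable {F : Type} [Group F] (R : Subgroup F) [R.Normal] (ℓ : ℕ)

instance : Module (ZMod ℓ) (Additive (ModCoinvariants R ℓ)) :=
  AddCommGroup.zmodModule (ModCoinvariants.pow_eq_one (R := R))

instance : Module (ZMod ℓ) (Additive (AbelianizationMod F ℓ)) :=
  AddCommGroup.zmodModule (AbelianizationMod.pow_eq_one (F := F))

variable [Fact ℓ.Prime]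

lemma ModCoinvariants.liftsConjInvariant_mk :
    LiftsConjInvariant (W := Additive (ModCoinvariants R ℓ)) (ZMod ℓ) (mk R ℓ) := fun θ hθ ↦
  have hB (b : Multiplicative (ZMod ℓ)) : b ^ ℓ = 1 :=
    congrArg Multiplicative.ofAdd (ZModModule.char_nsmul_eq_zero ℓ b.toAdd)
  ⟨(MonoidHom.toAdditiveLeft (lift hB θ hθ)).toZModLinearMap ℓ,
    fun _ ↦ rfl⟩

variable [Subsingleton (groupCohomology.H2 (Rep.trivial (ZMod ℓ) F (ZMod ℓ)))]

theorem pow_finrank_groupH2_le_card_ker [Finite (ModCoinvariants R ℓ)] :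
    ℓ ^ Module.finrank (ZMod ℓ) (groupH2 (ZMod ℓ) (F ⧸ R)) ≤
      Nat.card (ModCoinvariants.toAbelianizationMod R ℓ).ker := by
  let vW : Additive (ModCoinvariants R ℓ) →ₗ[ZMod ℓ] Additive (AbelianizationMod F ℓ) :=
    (MonoidHom.toAdditive (ModCoinvariants.toAbelianizationMod R ℓ)).toZModLinearMap ℓ
  have hker : Nat.card (ModCoinvariants.toAbelianizationMod R ℓ).ker =
      ℓ ^ Module.finrank (ZMod ℓ) (LinearMap.ker vW) :=
    (Module.natCard_eq_pow_finrank (V := LinearMap.ker vW)).trans (by rw [Nat.card_zmod])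
  rw [hker]
  exact Nat.pow_le_pow_right (Fact.out : ℓ.Prime).pos <| finrank_groupH2_le_finrank_ker
    (ModCoinvariants.liftsConjInvariant_mk R ℓ) (v := AbelianizationMod.mk ℓ) fun _ ↦ rfl

end ModPrime

section AbelianIndex

lemma card_eq_relIndex_comap_mk' {G : Type*} [Group G] (S : Subgroup G) [S.Normal]
    (Q : Subgroup (G ⧸ S)) :
    Nat.card Q = S.relIndex (Q.comap (QuotientGroup.mk' S)) := by
  have h := Subgroup.relIndex_ker (Q.comap (QuotientGroup.mk' S)) (QuotientGroup.mk' S)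
  rw [QuotientGroup.ker_mk',
    Subgroup.map_comap_eq_self_of_surjective (QuotientGroup.mk'_surjective S)] at h
  exact h.symm

lemma relIndex_map_dvd_relIndex_comap {G G' : Type*} [Group G] [Group G'] (f : G →* G')
    (S : Subgroup G) (T : Subgroup G') :
    (S.map f).relIndex (f.range ⊓ T) ∣ S.relIndex (T.comap f) := by
  rw [← Subgroup.map_comap_eq, Subgroup.relIndex_map_map,
    sup_eq_left.2 (Subgroup.ker_le_comap f T)]
  exact Subgroup.relIndex_dvd_of_le_left _ le_sup_left

variable {A : Type*} [CommGroup A] (S : Subgroup A) (p : ℕ)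

lemma map_powMonoidHom_le : S.map (powMonoidHom p) ≤ S :=
  Subgroup.map_le_iff_le_comap.2 fun _ hx ↦ S.pow_mem hx p

lemma mem_comap_primaryComponent_iff {x : A} :
    x ∈ (CommGroup.primaryComponent (A ⧸ S) p).comap (QuotientGroup.mk' S) ↔
      ∃ k : ℕ, x ^ p ^ k ∈ S := by
  simp [CommGroup.mem_primaryComponent, ← QuotientGroup.mk_pow]

lemma comap_primaryComponent_map_powMonoidHom :
    (CommGroup.primaryComponent (A ⧸ S.map (powMonoidHom p)) p).comap (QuotientGroup.mk' _) =
      (CommGroup.primaryComponent (A ⧸ S) p).comap (QuotientGroup.mk' S) := by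
  ext x
  rw [mem_comap_primaryComponent_iff, mem_comap_primaryComponent_iff]
  refine ⟨fun ⟨k, hk⟩ ↦ ⟨k, map_powMonoidHom_le S p hk⟩, fun ⟨k, hk⟩ ↦ ⟨k + 1, x ^ p ^ k, hk, ?_⟩⟩
  rw [powMonoidHom_apply, ← pow_mul, pow_succ]

lemma card_primaryComponent_quotient_map_pow :
    Nat.card (CommGroup.primaryComponent (A ⧸ S.map (powMonoidHom p)) p) =
      (S.map (powMonoidHom p)).relIndex S * Nat.card (CommGroup.primaryComponent (A ⧸ S) p) := by
  rw [card_eq_relIndex_comap_mk', card_eq_relIndex_comap_mk',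
    comap_primaryComponent_map_powMonoidHom, Subgroup.relIndex_mul_relIndex _ _ _
      (map_powMonoidHom_le S p)]
  exact fun x hx ↦ (mem_comap_primaryComponent_iff S p).2 ⟨0, by simpa using hx⟩

lemma card_ker_powMonoidHom_quotient :
    Nat.card (powMonoidHom p : A ⧸ S →* A ⧸ S).ker = S.relIndex (S.comap (powMonoidHom p)) := by
  rw [card_eq_relIndex_comap_mk']
  congr 1
  ext x
  simp [MonoidHom.mem_ker, ← QuotientGroup.mk_pow]

theorem card_primaryComponent_quotient_map_pow_dvd :
    Nat.card (CommGroup.primaryComponent (A ⧸ S.map (powMonoidHom p)) p) ∣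
      Nat.card (CommGroup.primaryComponent (A ⧸ S) p) *
        Nat.card (powMonoidHom p : A ⧸ S →* A ⧸ S).ker *
          (powMonoidHom p : A →* A).range.relIndex S := by
  have hindex : (S.map (powMonoidHom p)).relIndex S =
      (S.map (powMonoidHom p)).relIndex ((powMonoidHom p).range ⊓ S) *
        (powMonoidHom p : A →* A).range.relIndex S := by
    rw [Subgroup.relIndex_inf_mul_relIndex, inf_eq_left.2 (Subgroup.map_le_range _ S)]
  rw [card_primaryComponent_quotient_map_pow, hindex, card_ker_powMonoidHom_quotient, mul_comm,
    ← mul_assoc]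
  exact mul_dvd_mul_right (mul_dvd_mul_left _ (relIndex_map_dvd_relIndex_comap _ S S)) _

end AbelianIndex

section Transport

variable {F : Type*} [Group F]

/-- A surjection `φ : F → B` with kernel `N [F, F]` presents `B` as the quotient of the
abelianization of `F` by the image of `N`. -/
noncomputable def mulEquivAbelianizationQuotient {B : Type*} [Group B] {N : Subgroup F} {φ : F →* B}
    (hφ : Function.Surjective φ) (hker : φ.ker = N ⊔ commutator F) :
    B ≃* Abelianization F ⧸ N.map Abelianization.of :=
  (QuotientGroup.quotientKerEquivOfSurjective φ hφ).symm.trans <|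
    QuotientGroup.liftEquiv φ.ker (φ := (QuotientGroup.mk' _).comp Abelianization.of)
      ((QuotientGroup.mk'_surjective _).comp QuotientGroup.mk_surjective) <| by
        rw [← MonoidHom.comap_ker, QuotientGroup.ker_mk', Subgroup.comap_map_eq,
          Abelianization.ker_of, hker]

/-- The case `B = F/N[F, F]` of `mulEquivAbelianizationQuotient`. -/
noncomputable def quotientSupCommutatorEquiv (N : Subgroup F) [N.Normal] :
    F ⧸ (N ⊔ commutator F) ≃* Abelianization F ⧸ N.map Abelianization.of :=
  mulEquivAbelianizationQuotient (QuotientGroup.mk'_surjective _) (QuotientGroup.ker_mk' _)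

/-- The case `B = G/[G, G]`, where `G = F/N`, of `mulEquivAbelianizationQuotient`. -/
noncomputable def abelianizationQuotientEquiv (N : Subgroup F) [N.Normal] :
    Abelianization (F ⧸ N) ≃* Abelianization F ⧸ N.map Abelianization.of :=
  mulEquivAbelianizationQuotient (φ := Abelianization.of.comp (QuotientGroup.mk' N))
    (QuotientGroup.mk_surjective.comp (QuotientGroup.mk'_surjective N)) <| by
      rw [← MonoidHom.comap_ker, Abelianization.ker_of, commutator_def,
        ← Subgroup.map_top_of_surjective _ (QuotientGroup.mk'_surjective N),
        ← Subgroup.map_commutator, Subgroup.comap_map_eq, QuotientGroup.ker_mk', sup_comm,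
        commutator_def]

lemma card_pow_eq_one_congr {B C : Type*} [Group B] [CommGroup C] (e : B ≃* C) (n : ℕ) :
    Nat.card {x : B // x ^ n = 1} = Nat.card (powMonoidHom n : C →* C).ker :=
  Nat.card_congr <| e.toEquiv.subtypeEquiv fun x ↦ by simp [MonoidHom.mem_ker, ← map_pow]

lemma card_primary_congr {B C : Type*} [Group B] [CommGroup C] (e : B ≃* C) (p : ℕ) :
    Nat.card {x : B // ∃ n : ℕ, x ^ p ^ n = 1} = Nat.card (CommGroup.primaryComponent C p) :=
  Nat.card_congr <| e.toEquiv.subtypeEquiv fun x ↦ by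
    simp [CommGroup.mem_primaryComponent, ← map_pow]

lemma map_of_powerSubgroup (R : Subgroup F) (n : ℕ) :
    (powerSubgroup R n).map Abelianization.of =
      (R.map Abelianization.of).map (powMonoidHom n) := by
  refine le_antisymm ?_ ?_
  · refine Subgroup.map_le_iff_le_comap.2 (powerSubgroup_le_iff.2 fun r hr ↦ ?_)
    exact ⟨Abelianization.of r, ⟨r, hr, rfl⟩, (map_pow _ r n).symm⟩
  · rintro _ ⟨_, ⟨r, hr, rfl⟩, rfl⟩
    exact ⟨r ^ n, pow_mem_powerSubgroup R n hr, map_pow _ r n⟩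

theorem card_primary_powerSubgroup_dvd (R : Subgroup F) [R.Normal] (p : ℕ) :
    Nat.card {x : F ⧸ (powerSubgroup R p ⊔ commutator F) // ∃ n : ℕ, x ^ p ^ n = 1} ∣
      Nat.card {x : F ⧸ (R ⊔ commutator F) // ∃ n : ℕ, x ^ p ^ n = 1} *
        Nat.card {x : Abelianization (F ⧸ R) // x ^ p = 1} *
          (powMonoidHom p : Abelianization F →* Abelianization F).range.relIndex
            (R.map Abelianization.of) := by
  rw [card_primary_congr (quotientSupCommutatorEquiv _),
    card_primary_congr (quotientSupCommutatorEquiv R),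
    card_pow_eq_one_congr (abelianizationQuotientEquiv R), map_of_powerSubgroup]
  exact card_primaryComponent_quotient_map_pow_dvd _ p

end Transport

theorem dim_H2_le_general {F : Type} [Group F] (ℓ : ℕ) [Fact ℓ.Prime]
    [Subsingleton (groupCohomology.H2 (Rep.trivial (ZMod ℓ) F (ZMod ℓ)))]
    (R : Subgroup F) [R.Normal] (a b c e : ℕ)
    (ha : Nat.card {x : Abelianization (F ⧸ R) // x ^ ℓ = 1} = ℓ ^ a)
    (hb : Nat.card {x : F ⧸ (R ⊔ commutator F) // ∃ n : ℕ, x ^ ℓ ^ n = 1} = ℓ ^ b)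
    (hc : Nat.card {x : F ⧸ (powerSubgroup R ℓ ⊔ commutator F) // ∃ n : ℕ, x ^ ℓ ^ n = 1} = ℓ ^ c)
    (he : Nat.card (ModCoinvariants R ℓ) = ℓ ^ e) :
    (Module.finrank (ZMod ℓ) (groupH2 (ZMod ℓ) (F ⧸ R)) : ℤ) ≤ (a : ℤ) + b - c + e := by
  have hℓ : ℓ.Prime := Fact.out
  set h := Module.finrank (ZMod ℓ) (groupH2 (ZMod ℓ) (F ⧸ R))
  have : Finite (ModCoinvariants R ℓ) :=
    Nat.finite_of_card_ne_zero (he ▸ pow_ne_zero e hℓ.ne_zero)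
  let i := (powMonoidHom ℓ : Abelianization F →* _).range.relIndex (R.map Abelianization.of)
  let κ := Nat.card (ModCoinvariants.toAbelianizationMod R ℓ).ker
  have hκi : ℓ ^ e = κ * i := he ▸ ModCoinvariants.card_eq_card_ker_mul_relIndex R ℓ
  have hi : 0 < i := Nat.pos_of_mul_pos_left (hκi ▸ pow_pos hℓ.pos e)
  have hci : ℓ ^ c ≤ ℓ ^ b * ℓ ^ a * i := by
    rw [← ha, ← hb, ← hc]
    refine Nat.le_of_dvd ?_ (card_primary_powerSubgroup_dvd R ℓ)
    rw [ha, hb, ← pow_add]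
    exact Nat.mul_pos (pow_pos hℓ.pos _) hi
  have hpow : ℓ ^ (c + h) ≤ ℓ ^ (a + b + e) := calc
    ℓ ^ (c + h) = ℓ ^ c * ℓ ^ h := pow_add ..
    _ ≤ ℓ ^ b * ℓ ^ a * i * κ := Nat.mul_le_mul hci (pow_finrank_groupH2_le_card_ker R ℓ)
    _ = ℓ ^ (a + b + e) := by rw [pow_add, hκi]; ring
  have := (Nat.pow_le_pow_iff_right hℓ.one_lt).1 hpow
  omega

/-- Roberts' bound: for a finite presentation `G = F/R` and `k = 𝔽_ℓ`,
`dim_k H₂(G;k) ≤ a + b - c + e`, where `ℓ^a` is the order of the `ℓ`-torsion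
`Tor(H₁(G;ℤ), k)` of the abelianization `H₁(G;ℤ)`, `ℓ^b` and `ℓ^c` are the orders of the
`ℓ`-primary subgroups of `F/R[F,F]` and `F/Rˡ[F,F]` respectively, and `ℓ^e` is the order
of `k ⊗_ℤ R/[F,R] ≅ R/([F,R]Rˡ)`. -/
theorem dim_H2_le (m ℓ : ℕ) [Fact (Nat.Prime ℓ)]
    (R : Subgroup (FreeGroup (Fin m))) [R.Normal]
    (Rpow : Subgroup (FreeGroup (Fin m)))
    (hRpow : Rpow = Subgroup.closure {x | ∃ r ∈ R, x = r ^ ℓ}) [Rpow.Normal]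
    (a b c e : ℕ)
    (ha : Nat.card {x : Abelianization (FreeGroup (Fin m) ⧸ R) // x ^ ℓ = 1} = ℓ ^ a)
    (hb : Nat.card {x : FreeGroup (Fin m) ⧸ (R ⊔ commutator (FreeGroup (Fin m))) //
        ∃ n : ℕ, x ^ ℓ ^ n = 1} = ℓ ^ b)
    (hc : Nat.card {x : FreeGroup (Fin m) ⧸ (Rpow ⊔ commutator (FreeGroup (Fin m))) //
        ∃ n : ℕ, x ^ ℓ ^ n = 1} = ℓ ^ c)
    (he : Nat.card ((R : Subgroup (FreeGroup (Fin m))) ⧸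
        ((⁅(⊤ : Subgroup (FreeGroup (Fin m))), R⁆ ⊔ Rpow).subgroupOf R)) = ℓ ^ e) :
    (Module.finrank (ZMod ℓ) (groupH2 (ZMod ℓ) (FreeGroup (Fin m) ⧸ R)) : ℤ)
      ≤ (a : ℤ) + b - c + e := by
  subst hRpow
  exact dim_H2_le_general ℓ R a b c e ha hb hc he
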